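/- arXiv:math/0601361 — 4 statements merged into one kernel-verified Lean document; each statement's English description precedes it below -/
import Mathlib

section
/- Let n and p be integers with 2 < p < n−1 and p odd. A permutation π of {0,1}^n is an automorphism of Q_n^p if and only if it is an automorphism of Q_n; that is, Aut(Q_n^p) and Aut(Q_n) are the same subgroup of the permutation group on the vertex set. -/
/-- The p-th power of a graph `G`: distinct vertices are adjacent iff their
distance in `G` satisfies `0 < d_G(v,w) ≤ p` (in particular they are reachable). -/
def gpow {V : Type*} (G : SimpleGraph V) (p : ℕ) : SimpleGraph V where
  Adj v w := v ≠ w ∧ G.Reachable v w ∧ G.dist v w ≤ p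
  symm := ⟨fun v w h => ⟨h.1.symm, h.2.1.symm, by rw [SimpleGraph.dist_comm]; exact h.2.2⟩⟩
  loopless := ⟨fun v h => h.1 rfl⟩

/-- A permutation of the vertices is an automorphism of `G` iff it preserves adjacency. -/
def IsAuto {V : Type*} (G : SimpleGraph V) (π : Equiv.Perm V) : Prop :=
  ∀ v w, G.Adj (π v) (π w) ↔ G.Adj v w

/-- The `n`-dimensional hypercube: vertices are `{0,1}^n`, adjacent iff they differ in
exactly one coordinate. -/
def Q (n : ℕ) : SimpleGraph (Fin n → Bool) where
  Adj v w := (Finset.univ.filter fun i => v i ≠ w i).card = 1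
  symm := by
    refine ⟨?_⟩
    intro v w h
    rw [show (Finset.univ.filter fun i => w i ≠ v i) = (Finset.univ.filter fun i => v i ≠ w i) from by
      apply Finset.filter_congr; intro i _; simp [ne_comm]]
    exact h
  loopless := by refine ⟨?_⟩; intro v h; simp at h

abbrev Cb (n : ℕ) := Fin n → Bool

def flp {n : ℕ} (w : Cb n) (i : Fin n) : Cb n := Function.update w i (!w i)

lemma flp_same {n : ℕ} (w : Cb n) (i : Fin n) : flp w i i = !w i := by simp [flp]

lemma flp_ne {n : ℕ} (w : Cb n) {i j : Fin n} (h : j ≠ i) : flp w i j = w j := by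
  simp [flp, h]

lemma flp_flp {n : ℕ} (w : Cb n) (i : Fin n) : flp (flp w i) i = w := by
  funext j
  by_cases h : j = i
  · subst h; simp [flp_same]
  · simp [flp_ne _ h]

lemma hd_flp {n : ℕ} (y w : Cb n) (i : Fin n) (h : y i = w i) :
    hammingDist y (flp w i) = hammingDist y w + 1 := by
  unfold hammingDist
  rw [show (Finset.univ.filter fun j => y j ≠ flp w i j) =
    insert i (Finset.univ.filter fun j => y j ≠ w j) from ?_, Finset.card_insert_of_notMem (by simp [h])]
  ext j
  by_cases hj : j = i
  · subst hj; simp [flp_same, h]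
  · simp [flp_ne _ hj, hj]

lemma hd_flp' {n : ℕ} (y w : Cb n) (i : Fin n) (h : y i ≠ w i) :
    hammingDist y w = hammingDist y (flp w i) + 1 := by
  have := hd_flp y (flp w i) i (by rw [flp_same]; revert h; cases y i <;> cases w i <;> simp)
  rwa [flp_flp] at this

lemma exists_ne_of_hd {n : ℕ} (v w : Cb n) (h : 0 < hammingDist v w) : ∃ i, v i ≠ w i := by
  by_contra hc
  push Not at hc
  have : v = w := funext hc
  simp [this] at h

lemma hd_split {n : ℕ} (a : ℕ) : ∀ (b : ℕ) (v w : Cb n),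
    hammingDist v w ≤ a + b ↔ ∃ u, hammingDist v u ≤ a ∧ hammingDist u w ≤ b := by
  intro b v w
  constructor
  · induction b generalizing w with
    | zero => intro h; exact ⟨w, by simpa using h, by simp⟩
    | succ b ih =>
      intro h
      by_cases h0 : hammingDist v w ≤ a + b
      · obtain ⟨u, h1, h2⟩ := ih w h0
        exact ⟨u, h1, by omega⟩
      · obtain ⟨i, hi⟩ := exists_ne_of_hd v w (by omega)
        have e := hd_flp' v w i hi
        obtain ⟨u, h1, h2⟩ := ih (flp w i) (by omega)
        refine ⟨u, h1, ?_⟩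
        by_cases hu : u i = w i
        · have := hd_flp u w i hu
          omega
        · have := hd_flp' u w i hu
          omega
  · rintro ⟨u, h1, h2⟩
    have := hammingDist_triangle v u w
    omega

lemma Q_adj {n : ℕ} (v w : Cb n) : (Q n).Adj v w ↔ hammingDist v w = 1 := Iff.rfl

lemma hd_le_walk {n : ℕ} {v w : Cb n} (q : (Q n).Walk v w) : hammingDist v w ≤ q.length := by
  induction q with
  | nil => simp
  | @cons a b c h q ih =>
    have := hammingDist_triangle a b c
    rw [Q_adj] at h
    simp only [SimpleGraph.Walk.length_cons]
    omega

lemma exists_walk {n : ℕ} (v : Cb n) : ∀ (m : ℕ) (w : Cb n), hammingDist v w = m →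
    ∃ q : (Q n).Walk v w, q.length = m := by
  intro m
  induction m with
  | zero =>
    intro w h
    have := hammingDist_eq_zero.1 h
    subst this
    exact ⟨SimpleGraph.Walk.nil, rfl⟩
  | succ m ih =>
    intro w h
    obtain ⟨i, hi⟩ := exists_ne_of_hd v w (by omega)
    have e := hd_flp' v w i hi
    obtain ⟨q, hq⟩ := ih (flp w i) (by omega)
    have ha : (Q n).Adj (flp w i) w := by
      rw [Q_adj, hammingDist_comm, hd_flp w w i rfl]; simp
    exact ⟨q.concat ha, by simp [hq]⟩

lemma gpow_adj {n p : ℕ} (v w : Cb n) :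
    (gpow (Q n) p).Adj v w ↔ v ≠ w ∧ hammingDist v w ≤ p := by
  change v ≠ w ∧ (Q n).Reachable v w ∧ (Q n).dist v w ≤ p ↔ _
  obtain ⟨q, hq⟩ := exists_walk v _ w rfl
  have hr : (Q n).Reachable v w := ⟨q⟩
  obtain ⟨q', hq'⟩ := hr.exists_walk_length_eq_dist
  have h1 := hd_le_walk q'
  have h2 := SimpleGraph.dist_le q
  have : (Q n).dist v w = hammingDist v w := by omega
  simp [hr, this]

def Pres {n : ℕ} (π : Equiv.Perm (Cb n)) (k : ℕ) : Prop :=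
  ∀ v w, hammingDist (π v) (π w) ≤ k ↔ hammingDist v w ≤ k

lemma Pres.add {n : ℕ} {π : Equiv.Perm (Cb n)} {a b : ℕ} (ha : Pres π a) (hb : Pres π b) :
    Pres π (a + b) := by
  intro v w
  rw [hd_split, hd_split]
  constructor
  · rintro ⟨u, h1, h2⟩
    refine ⟨π.symm u, ?_, ?_⟩
    · rw [← ha]; simpa using h1
    · rw [← hb]; simpa using h2
  · rintro ⟨u, h1, h2⟩
    exact ⟨π u, (ha _ _).2 h1, (hb _ _).2 h2⟩

lemma Pres.mul {n : ℕ} {π : Equiv.Perm (Cb n)} {a : ℕ} (ha : Pres π a) (m : ℕ) :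
    Pres π (m * a) := by
  induction m with
  | zero => intro v w; simp
  | succ m ih => rw [Nat.succ_mul]; exact ih.add ha

lemma isAuto_gpow {n p : ℕ} (π : Equiv.Perm (Cb n)) : IsAuto (gpow (Q n) p) π ↔ Pres π p := by
  constructor
  · intro h v w
    by_cases e : v = w
    · subst e; simp
    · have := h v w
      rw [gpow_adj, gpow_adj] at this
      simpa [e] using this
  · intro h v w
    rw [gpow_adj, gpow_adj, h v w]
    simp

lemma isAuto_Q {n : ℕ} (π : Equiv.Perm (Cb n)) : IsAuto (Q n) π ↔ Pres π 1 := by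
  have key : ∀ v w : Cb n, hammingDist v w = 1 ↔ v ≠ w ∧ hammingDist v w ≤ 1 := by
    intro v w
    rw [← hammingDist_pos]
    omega
  rw [← isAuto_gpow]
  unfold IsAuto
  simp only [gpow_adj, Q_adj, key]

lemma exists_both {n : ℕ} (v w : Cb n) (h : hammingDist v w = 2) (X : Finset (Fin n)) (q : ℕ)
    (hX : X.card + 2 + q ≤ n) :
    ∃ z, hammingDist z v = q + 1 ∧ hammingDist z w = q + 1 ∧ ∀ i ∈ X, v i = w i → z i = v i := by
  obtain ⟨j, k, hjk, hD⟩ := Finset.card_eq_two.1 h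
  have hm : ∀ i, v i ≠ w i ↔ i = j ∨ i = k := by
    intro i
    have := Finset.ext_iff.1 hD i
    simpa using this
  obtain ⟨U, hU, hc⟩ := Finset.exists_subset_card_eq (s := (X ∪ {j, k})ᶜ) (n := q) (by
    rw [Finset.card_compl, Fintype.card_fin]
    have h1 := Finset.card_union_le X {j, k}
    have h2 : ({j, k} : Finset (Fin n)).card = 2 := Finset.card_pair hjk
    omega)
  have hU' : ∀ i ∈ U, i ∉ X ∧ i ≠ j ∧ i ≠ k := by
    intro i hi
    have := hU hi
    simp at this
    tauto
  have hjU : j ∉ U := fun h => (hU' j h).2.1 rfl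
  have hkU : k ∉ U := fun h => (hU' k h).2.2 rfl
  refine ⟨fun i => if i ∈ insert j U then !v i else v i, ?_, ?_, ?_⟩
  · rw [← hc, ← Finset.card_insert_of_notMem hjU]
    unfold hammingDist
    congr 1
    ext i
    by_cases hi : i ∈ insert j U <;> simp at hi ⊢ <;> tauto
  · rw [← hc, ← Finset.card_insert_of_notMem hkU]
    unfold hammingDist
    congr 1
    ext i
    have hmi := hm i
    by_cases hj : i = j
    · subst hj
      have : v i ≠ w i := by simp [hmi]
      have : (!v i) = w i := by revert this; cases v i <;> cases w i <;> simp
      simp [this, hjk, hjU]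
    · by_cases hk : i = k
      · subst hk
        have : v i ≠ w i := by simp [hmi]
        simp [this, hj, hkU]
      · have : v i = w i := by by_contra hne; simp [hj, hk] at hmi; exact hne hmi
        by_cases hi : i ∈ U <;> simp [hi, hj, hk, this]
  · intro i hi hvw
    have h1 : i ∉ U := fun h => (hU' i h).1 hi
    have h2 : i ≠ j := by
      intro e
      exact (hm i).2 (Or.inl e) hvw
    simp [h1, h2]

lemma hd_one_ne {n : ℕ} (v w z : Cb n) (h : hammingDist v w = 1) :
    hammingDist z v ≠ hammingDist z w := by
  obtain ⟨i, hi⟩ := exists_ne_of_hd v w (by omega)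
  have e := hd_flp' v w i hi
  have e2 : v = flp w i := hammingDist_eq_zero.1 (by omega)
  rw [e2]
  by_cases hz : z i = w i
  · have := hd_flp z w i hz
    omega
  · have := hd_flp' z w i hz
    omega

def S {n : ℕ} (p : ℕ) (v w : Cb n) : Finset (Cb n) :=
  Finset.univ.filter fun y => hammingDist y v ≤ p ∧ hammingDist y w ≤ p

lemma mem_S {n p : ℕ} {v w y : Cb n} :
    y ∈ S p v w ↔ hammingDist y v ≤ p ∧ hammingDist y w ≤ p := by simp [S]

lemma S_map {n p : ℕ} (π : Equiv.Perm (Cb n)) (h : Pres π p) (v w : Cb n) :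
    (S p (π v) (π w)).card = (S p v w).card := by
  rw [← Finset.card_map π.toEmbedding (s := S p v w)]
  congr 1
  ext y
  simp only [Finset.mem_map_equiv, mem_S]
  rw [← h (π.symm y) v, ← h (π.symm y) w]
  simp

lemma exists_iso {n : ℕ} (v w v' w' : Cb n) (h : hammingDist v w = hammingDist v' w') :
    ∃ τ : Equiv.Perm (Cb n), (∀ k, Pres τ k) ∧ τ v = v' ∧ τ w = w' := by
  have hc : Fintype.card {i // v' i ≠ w' i} = Fintype.card {i // v i ≠ w i} := by
    rw [Fintype.card_subtype, Fintype.card_subtype]; exact h.symm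
  let e := Fintype.equivOfCardEq hc
  let σ : Equiv.Perm (Fin n) := e.extendSubtype
  have hσ : ∀ i, v (σ i) ≠ w (σ i) ↔ v' i ≠ w' i := by
    intro i
    constructor
    · intro h1
      by_contra h2
      exact e.extendSubtype_not_mem i (not_not.2 h2) h1
    · intro h1
      exact e.extendSubtype_mem i h1
  let t : Cb n → Cb n := fun y i => xor (y (σ i)) (xor (v (σ i)) (v' i))
  have ht : ∀ a b, hammingDist (t a) (t b) = hammingDist a b := by
    intro a b
    unfold hammingDist
    apply Finset.card_bij (fun i _ => σ i)
    · intro i hi; simpa [t] using hi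
    · intro i _ j _ hij; exact σ.injective hij
    · intro j hj
      refine ⟨σ.symm j, ?_, by simp⟩
      simpa [t] using hj
  have hinj : Function.Injective t := by
    intro a b hab
    apply hammingDist_eq_zero.1
    rw [← ht, hab]; simp
  refine ⟨Equiv.ofBijective t (Finite.injective_iff_bijective.1 hinj), ?_, ?_, ?_⟩
  · intro k a b
    simp [ht]
  · funext i
    simp [t]
  · funext i
    have := hσ i
    simp only [Equiv.ofBijective_apply, t]
    revert this
    cases v (σ i) <;> cases w (σ i) <;> cases v' i <;> cases w' i <;> simp

lemma S_card_eq {n p : ℕ} (v w v' w' : Cb n) (h : hammingDist v w = hammingDist v' w') :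
    (S p v w).card = (S p v' w').card := by
  obtain ⟨τ, h1, rfl, rfl⟩ := exists_iso v w v' w' h
  exact (S_map τ (h1 p) v w).symm

lemma flp_inj {n : ℕ} (i : Fin n) : Function.Injective (fun y : Cb n => flp y i) := by
  intro a b h
  have : flp (flp a i) i = flp (flp b i) i := congrArg (fun y => flp y i) h
  simpa [flp_flp] using this

lemma hd_flp_flp {n : ℕ} (y w : Cb n) (i : Fin n) :
    hammingDist (flp y i) (flp w i) = hammingDist y w := by
  by_cases h : y i = w i
  · have h1 := hd_flp y w i h
    have h2 := hd_flp' (flp w i) y i (by rw [flp_same, h]; simp)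
    rw [hammingDist_comm, hammingDist_comm (flp w i) (flp y i)] at h2
    omega
  · have h1 := hd_flp' y w i h
    have h2 := hd_flp (flp w i) y i
      (by rw [flp_same]; revert h; cases y i <;> cases w i <;> simp)
    rw [hammingDist_comm, hammingDist_comm (flp w i) y] at h2
    omega

/-- flipping sends the new part into the old part, missing the points at distance `p`. -/
lemma S_sdiff {n p : ℕ} (v w : Cb n) (i : Fin n) (h : v i = w i) (y : Cb n)
    (hy : y ∈ S p v (flp w i) \ S p v w) :
    flp y i ∈ S p v w \ S p v (flp w i) ∧ hammingDist (flp y i) v < p := by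
  simp only [Finset.mem_sdiff, mem_S] at hy ⊢
  obtain ⟨⟨h1, h2⟩, h3⟩ := hy
  have hyw : y i ≠ w i := by
    intro e
    have := hd_flp y w i e
    omega
  have e1 := hd_flp' y w i hyw
  have e2 := hd_flp' y v i (by rwa [h])
  have e3 := hd_flp_flp y w i
  have e4 := hd_flp_flp y (flp w i) i
  have e5 := hd_flp_flp y (flp v i) i
  rw [flp_flp] at e4 e5
  omega

lemma S_le {n p : ℕ} (v w : Cb n) (i : Fin n) (h : v i = w i) :
    (S p v (flp w i)).card ≤ (S p v w).card := by
  have h1 : (S p v (flp w i) \ S p v w).card ≤ (S p v w \ S p v (flp w i)).card :=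
    Finset.card_le_card_of_injOn (fun y => flp y i)
      (fun y hy => (S_sdiff v w i h y hy).1) ((flp_inj i).injOn)
  have h2 := Finset.card_sdiff_add_card_inter (S p v (flp w i)) (S p v w)
  have h3 := Finset.card_sdiff_add_card_inter (S p v w) (S p v (flp w i))
  rw [Finset.inter_comm] at h3
  omega

lemma S_lt {n p : ℕ} (hp : 1 ≤ p) (hn : p + 2 ≤ n) (v w : Cb n) (i : Fin n) (h : v i = w i)
    (h2 : hammingDist v w = 2) :
    (S p v (flp w i)).card < (S p v w).card := by
  have h1 : (S p v (flp w i) \ S p v w).card < (S p v w \ S p v (flp w i)).card := by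
    rw [← Finset.card_image_of_injective _ (flp_inj i)]
    apply Finset.card_lt_card
    obtain ⟨z, z1, z2, z3⟩ := exists_both v w h2 {i} (p - 1) (by simp; omega)
    have z4 := z3 i (by simp) h
    have e := hd_flp z w i (by rw [z4, h])
    rw [Finset.ssubset_iff_of_subset]
    · refine ⟨z, ?_, ?_⟩
      · simp only [Finset.mem_sdiff, mem_S]
        omega
      · intro hz
        obtain ⟨y, hy, rfl⟩ := Finset.mem_image.1 hz
        have := (S_sdiff v w i h y hy).2
        omega
    · intro x hx
      obtain ⟨y, hy, rfl⟩ := Finset.mem_image.1 hx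
      exact (S_sdiff v w i h y hy).1
  have h2 := Finset.card_sdiff_add_card_inter (S p v (flp w i)) (S p v w)
  have h3 := Finset.card_sdiff_add_card_inter (S p v w) (S p v (flp w i))
  rw [Finset.inter_comm] at h3
  omega

lemma S_far {n p : ℕ} (hp : 1 ≤ p) (hn : p + 2 ≤ n) (a : Cb n) : ∀ (m : ℕ) (b : Cb n),
    hammingDist a b = m + 3 → ∃ c, hammingDist a c = 2 ∧ (S p a b).card < (S p a c).card := by
  intro m
  induction m with
  | zero =>
    intro b h
    obtain ⟨i, hi⟩ := exists_ne_of_hd a b (by omega)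
    have e := hd_flp' a b i hi
    refine ⟨flp b i, by omega, ?_⟩
    have := S_lt hp hn a (flp b i) i
      (by rw [flp_same]; revert hi; cases a i <;> cases b i <;> simp) (by omega)
    rwa [flp_flp] at this
  | succ m ih =>
    intro b h
    obtain ⟨i, hi⟩ := exists_ne_of_hd a b (by omega)
    have e := hd_flp' a b i hi
    obtain ⟨c, h1, h2⟩ := ih (flp b i) (by omega)
    refine ⟨c, h1, lt_of_le_of_lt ?_ h2⟩
    have := S_le (p := p) a (flp b i) i
      (by rw [flp_same]; revert hi; cases a i <;> cases b i <;> simp)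
    rwa [flp_flp] at this

lemma S_near {n p : ℕ} (hn : 2 ≤ n) (v w a c : Cb n) (h : v ≠ w) (h2 : hammingDist v w ≤ 2)
    (hac : hammingDist a c = 2) : (S p a c).card ≤ (S p v w).card := by
  have hpos := hammingDist_pos.2 h
  by_cases hh : hammingDist v w = 2
  · exact (S_card_eq a c v w (by omega)).le
  · have : ∃ i, v i = w i := by
      by_contra hc
      push Not at hc
      have : hammingDist v w = n := by
        unfold hammingDist
        simp [hc]
      omega
    obtain ⟨i, hi⟩ := this
    have e := hd_flp v w i hi
    rw [S_card_eq a c v (flp w i) (by omega)]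
    exact S_le v w i hi

lemma pres_two_aux {n p : ℕ} (hp : 1 ≤ p) (hn : p + 2 ≤ n) (π : Equiv.Perm (Cb n))
    (h : Pres π p) (v w : Cb n) (h2 : hammingDist v w ≤ 2) : hammingDist (π v) (π w) ≤ 2 := by
  by_cases e : v = w
  · subst e; simp
  · by_contra hc
    obtain ⟨c, h3, h4⟩ := S_far hp hn (π v) (hammingDist (π v) (π w) - 3) (π w) (by omega)
    have := S_near (p := p) (by omega) v w (π v) c e h2 h3
    rw [S_map π h] at h4
    omega

lemma Pres.symm {n k : ℕ} {π : Equiv.Perm (Cb n)} (h : Pres π k) : Pres π.symm k := by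
  intro v w
  rw [← h]; simp

lemma pres_two {n p : ℕ} (hp : 1 ≤ p) (hn : p + 2 ≤ n) (π : Equiv.Perm (Cb n))
    (h : Pres π p) : Pres π 2 := by
  intro v w
  constructor
  · intro h2
    simpa using pres_two_aux hp hn π.symm h.symm _ _ h2
  · exact pres_two_aux hp hn π h v w

lemma le_one_iff {n p : ℕ} (hn : p + 2 ≤ n) (v w : Cb n) :
    hammingDist v w ≤ 1 ↔ hammingDist v w ≤ 2 ∧ (v = w ∨ ∀ z,
      ¬ ((hammingDist z v ≤ p + 1 ∧ ¬ hammingDist z v ≤ p) ∧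
        (hammingDist z w ≤ p + 1 ∧ ¬ hammingDist z w ≤ p))) := by
  constructor
  · intro h
    refine ⟨by omega, ?_⟩
    by_cases e : v = w
    · exact Or.inl e
    · right
      have := hammingDist_pos.2 e
      intro z hz
      exact hd_one_ne v w z (by omega) (by omega)
  · rintro ⟨h1, rfl | h2⟩
    · simp
    · by_contra hc
      obtain ⟨z, z1, z2, -⟩ := exists_both v w (by omega) ∅ p (by simp; omega)
      exact h2 z (by omega)

theorem stmt_3 (n p : ℕ) (h1 : 2 < p) (h2 : p < n - 1) (hodd : Odd p) :
    ∀ π : Equiv.Perm (Fin n → Bool), IsAuto (gpow (Q n) p) π ↔ IsAuto (Q n) π := by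
  intro π
  rw [isAuto_gpow, isAuto_Q]
  constructor
  · intro h
    have hn : p + 2 ≤ n := by omega
    have hh := pres_two (by omega) hn π h
    have h3 : Pres π (p + 1) := by
      obtain ⟨m, rfl⟩ := hodd
      have := hh.mul (m + 1)
      rwa [show (m + 1) * 2 = 2 * m + 1 + 1 by ring] at this
    intro v w
    rw [le_one_iff hn, le_one_iff hn, hh v w, π.injective.eq_iff, ← π.forall_congr_right]
    simp only [h _ _, h3 _ _]
  · intro h
    simpa using h.mul p
end

section
/- There is no distinguishing 2-coloring of AQ_3: for every coloring c of the vertices of AQ_3 with 2 colors, there exists a nontrivial automorphism of AQ_3 that preserves c. -/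
/-- The `n`-dimensional augmented cube: vertices are `{0,1}^n`; distinct vertices `a`, `b`
are adjacent iff either (1) they differ in exactly one coordinate `l`, or (2) there is an
`l` such that they agree on all coordinates before `l` and differ on all coordinates from
`l` on. -/
def AQ (n : ℕ) : SimpleGraph (Fin n → Bool) where
  Adj a b := (∃ l, a l ≠ b l ∧ ∀ i, i ≠ l → a i = b i) ∨
             (∃ l, (∀ i, i < l → a i = b i) ∧ ∀ i, l ≤ i → a i ≠ b i)
  symm := by
    refine ⟨?_⟩
    rintro a b (⟨l, h1, h2⟩ | ⟨l, h1, h2⟩)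
    · exact Or.inl ⟨l, h1.symm, fun i hi => (h2 i hi).symm⟩
    · exact Or.inr ⟨l, fun i hi => (h1 i hi).symm, fun i hi => (h2 i hi).symm⟩
  loopless := by
    refine ⟨?_⟩
    rintro a (⟨l, h1, _⟩ | ⟨l, _, h2⟩)
    · exact h1 rfl
    · exact h2 l le_rfl rfl

theorem swap_preserves {V : Type*} [DecidableEq V] (c : V → Fin 2) (a b : V) (h : c a = c b) :
    ∀ v, c (Equiv.swap a b v) = c v := by
  intro v
  rw [Equiv.swap_apply_def]
  split_ifs with h1 h2
  · rw [h1, h]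
  · rw [h2, h]
  · rfl

/- The complement of `AQ 3` is two disjoint 4-cycles, one being 000, 101, 011, 110. Every
2-coloring of a 4-cycle is preserved by one of four reflections. -/
theorem stmt_15 (c : (Fin 3 → Bool) → Fin 2) :
    ∃ π : Equiv.Perm (Fin 3 → Bool), IsAuto (AQ 3) π ∧ π ≠ 1 ∧ ∀ v, c (π v) = c v := by
  by_cases h1 : c ![false, false, false] = c ![false, true, true]
  · refine ⟨Equiv.swap ![false, false, false] ![false, true, true], ?_, by decide +kernel,
      swap_preserves c _ _ h1⟩
    unfold IsAuto AQ
    decide +kernel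
  by_cases h2 : c ![true, false, true] = c ![true, true, false]
  · refine ⟨Equiv.swap ![true, false, true] ![true, true, false], ?_, by decide +kernel,
      swap_preserves c _ _ h2⟩
    unfold IsAuto AQ
    decide +kernel
  by_cases h3 : c ![false, false, false] = c ![true, false, true]
  · have h4 : c ![false, true, true] = c ![true, true, false] := by omega
    refine ⟨Equiv.swap ![false, false, false] ![true, false, true] *
      Equiv.swap ![false, true, true] ![true, true, false], ?_, by decide +kernel, fun v => ?_⟩
    · unfold IsAuto AQ
      decide +kernel
    · rw [Equiv.Perm.mul_apply, swap_preserves c _ _ h3, swap_preserves c _ _ h4]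
  · have h4 : c ![false, false, false] = c ![true, true, false] := by omega
    have h5 : c ![true, false, true] = c ![false, true, true] := by omega
    refine ⟨Equiv.swap ![false, false, false] ![true, true, false] *
      Equiv.swap ![true, false, true] ![false, true, true], ?_, by decide +kernel, fun v => ?_⟩
    · unfold IsAuto AQ
      decide +kernel
    · rw [Equiv.Perm.mul_apply, swap_preserves c _ _ h4, swap_preserves c _ _ h5]
end

section
/- For n ≥ 4, define the 2-coloring c of the vertices of AQ_n by c(0⋯0) = 2, c(0⋯01) = 1, and c(x_1⋯x_n) = x_n + 1 for every other vertex. Then the only automorphism of AQ_n preserving c is the identity; i.e., c is a distinguishing 2-coloring of AQ_n. -/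
namespace AQProof

/-- pointwise xor -/
def xr {n : ℕ} (x y : Fin n → Bool) : Fin n → Bool := fun j => xor (x j) (y j)

/-- unit vector -/
def ee (n i : ℕ) : Fin n → Bool := fun j => decide (j.val = i)

/-- suffix vector -/
def ss (n i : ℕ) : Fin n → Bool := fun j => decide (i ≤ j.val)

theorem xr_apply {n : ℕ} (x y : Fin n → Bool) (j : Fin n) : xr x y j = xor (x j) (y j) := rfl

theorem xr_comm {n : ℕ} (x y : Fin n → Bool) : xr x y = xr y x := by
  funext j; simp [xr_apply, Bool.xor_comm]

theorem xr_assoc {n : ℕ} (x y z : Fin n → Bool) : xr (xr x y) z = xr x (xr y z) := by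
  funext j; simp [xr_apply]

theorem xr_cancel {n : ℕ} (x y : Fin n → Bool) : xr x (xr x y) = y := by
  funext j; simp [xr_apply]

theorem xr_inj {n : ℕ} {x y z : Fin n → Bool} (h : xr x y = xr x z) : y = z := by
  rw [← xr_cancel x y, h, xr_cancel]

theorem xr_xr {n : ℕ} (x y z : Fin n → Bool) : xr (xr x y) (xr x z) = xr y z := by
  funext j; simp only [xr_apply]; cases x j <;> cases y j <;> cases z j <;> rfl

theorem ss_succ {n i : ℕ} : xr (ss n i) (ss n (i+1)) = ee n i := by
  funext j
  simp only [xr_apply, ss, ee]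
  rw [Bool.eq_iff_iff]
  simp
  omega

theorem ss_last {n : ℕ} (hn : 0 < n) : ss n (n-1) = ee n (n-1) := by
  funext j
  simp only [ss, ee]
  rw [Bool.eq_iff_iff]
  simp
  omega

theorem ss_inj {n i k : ℕ} (hi : i < n) (hk : k < n) (h : ss n i = ss n k) : i = k := by
  have h1 := congrFun h ⟨i, hi⟩
  have h2 := congrFun h ⟨k, hk⟩
  simp [ss] at h1 h2
  omega

theorem ss_ss {n i j k : ℕ} (hi : i < n) (hj : j < n) (hk : k < n)
    (h : xr (ss n i) (ss n j) = ee n k) : (i = k ∧ j = k + 1) ∨ (j = k ∧ i = k + 1) := by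
  have h1 := congrFun h ⟨i, hi⟩
  have h2 := congrFun h ⟨j, hj⟩
  have h3 := congrFun h ⟨k, hk⟩
  rcases lt_trichotomy i j with hij | hij | hij
  · have h4 := congrFun h ⟨j-1, by omega⟩
    simp only [xr_apply, ss, ee] at h1 h2 h3 h4
    rw [Bool.eq_iff_iff] at h1 h2 h3 h4
    simp at h1 h2 h3 h4
    omega
  · simp [xr_apply, ss, ee] at h3
    omega
  · have h4 := congrFun h ⟨i-1, by omega⟩
    simp only [xr_apply, ss, ee] at h1 h2 h3 h4
    rw [Bool.eq_iff_iff] at h1 h2 h3 h4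
    simp at h1 h2 h3 h4
    omega

theorem ee_ee {n i j k : ℕ} (hi : i < n) (hj : j < n) (hk : k < n)
    (h : xr (ee n i) (ee n j) = ee n k) : False := by
  have h1 := congrFun h ⟨i, hi⟩
  have h2 := congrFun h ⟨j, hj⟩
  have h3 := congrFun h ⟨k, hk⟩
  simp only [xr_apply, ee] at h1 h2 h3
  rw [Bool.eq_iff_iff] at h1 h2 h3
  simp at h1 h2 h3
  omega

theorem adj_iff {n : ℕ} (a b : Fin n → Bool) :
    (AQ n).Adj a b ↔ (∃ i, i < n ∧ b = xr a (ee n i)) ∨ (∃ i, i < n ∧ b = xr a (ss n i)) := by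
  constructor
  · rintro (⟨l, h1, h2⟩ | ⟨l, h1, h2⟩)
    · refine Or.inl ⟨l.val, l.isLt, ?_⟩
      funext j
      by_cases hj : j = l
      · subst hj
        simp only [xr_apply, ee]
        revert h1
        cases a j <;> cases b j <;> simp
      · have : ¬ (j.val = l.val) := fun h => hj (Fin.ext h)
        simp [xr_apply, ee, this, h2 j hj]
    · refine Or.inr ⟨l.val, l.isLt, ?_⟩
      funext j
      by_cases hj : l ≤ j
      · have h := h2 j hj
        have : l.val ≤ j.val := hj
        simp only [xr_apply, ss, this]
        revert h
        cases a j <;> cases b j <;> simp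
      · have : ¬ (l.val ≤ j.val) := hj
        simp [xr_apply, ss, this, h1 j (not_le.mp hj)]
  · rintro (⟨l, hl, rfl⟩ | ⟨l, hl, rfl⟩)
    · refine Or.inl ⟨⟨l, hl⟩, ?_, ?_⟩
      · simp [xr_apply, ee]
      · intro i hi
        have : ¬ (i.val = l) := fun h => hi (Fin.ext h)
        simp [xr_apply, ee, this]
    · refine Or.inr ⟨⟨l, hl⟩, ?_, ?_⟩
      · intro i hi
        have : ¬ (l ≤ i.val) := not_le.mpr hi
        simp [xr_apply, ss, this]
      · intro i hi
        have : l ≤ i.val := hi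
        simp [xr_apply, ss, this]

theorem adj_s {n : ℕ} (a : Fin n → Bool) {i : ℕ} (hi : i < n) : (AQ n).Adj a (xr a (ss n i)) :=
  (adj_iff _ _).2 (Or.inr ⟨i, hi, rfl⟩)

theorem adj_e {n : ℕ} (a : Fin n → Bool) {i : ℕ} (hi : i < n) : (AQ n).Adj a (xr a (ee n i)) :=
  (adj_iff _ _).2 (Or.inl ⟨i, hi, rfl⟩)

theorem ss_at {n i : ℕ} (hi : i < n) (p : n - 1 < n) : ss n i ⟨n-1, p⟩ = true := by
  simp [ss]; omega

theorem ee_at {n i : ℕ} (hi : i + 1 < n) (p : n - 1 < n) : ee n i ⟨n-1, p⟩ = false := by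
  simp [ee]; omega

theorem adj_ne {n : ℕ} (p : n - 1 < n) {a b : Fin n → Bool} (h : (AQ n).Adj a b)
    (hl : a ⟨n-1, p⟩ ≠ b ⟨n-1, p⟩) : ∃ i, i < n ∧ b = xr a (ss n i) := by
  rcases (adj_iff _ _).1 h with ⟨i, hi, rfl⟩ | h
  · by_cases hi' : i + 1 < n
    · simp [xr_apply, ee_at hi'] at hl
    · obtain rfl : i = n - 1 := by omega
      exact ⟨n-1, p, by rw [ss_last (by omega)]⟩
  · exact h

theorem adj_eq {n : ℕ} (p : n - 1 < n) {a b : Fin n → Bool} (h : (AQ n).Adj a b)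
    (hl : a ⟨n-1, p⟩ = b ⟨n-1, p⟩) : ∃ i, i + 1 < n ∧ b = xr a (ee n i) := by
  rcases (adj_iff _ _).1 h with ⟨i, hi, rfl⟩ | ⟨i, hi, rfl⟩
  · by_cases hi' : i + 1 < n
    · exact ⟨i, hi', rfl⟩
    · obtain rfl : i = n - 1 := by omega
      simp [xr_apply, ee] at hl
  · simp [xr_apply, ss_at hi] at hl

theorem adj_ss {n : ℕ} {y : Fin n → Bool} {i k : ℕ} (hi : i < n) (hk : k < n)
    (h : (AQ n).Adj (xr y (ss n i)) (xr y (ss n k))) : k = i + 1 ∨ i = k + 1 := by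
  have p : n - 1 < n := by omega
  obtain ⟨j, hj, h2⟩ := adj_eq p h (by simp [xr_apply, ss_at hi, ss_at hk])
  rw [xr_assoc] at h2
  have h3 := xr_inj h2
  have h4 : xr (ss n i) (ss n k) = ee n j := by rw [h3, xr_cancel]
  have := ss_ss hi hk (by omega) h4
  omega

theorem adj_se {n : ℕ} {y : Fin n → Bool} {i k : ℕ} (hi : i < n) (hk : k + 1 < n)
    (h : (AQ n).Adj (xr y (ss n i)) (xr y (ee n k))) : i = k ∨ i = k + 1 := by
  have p : n - 1 < n := by omega
  obtain ⟨j, hj, h2⟩ := adj_ne p h (by simp [xr_apply, ss_at hi, ee_at hk])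
  rw [xr_assoc] at h2
  have h3 := xr_inj h2
  have := ss_ss hi hj (by omega) h3.symm
  omega

theorem adj_ss_succ {n : ℕ} (y : Fin n → Bool) {i : ℕ} (hi : i < n) :
    (AQ n).Adj (xr y (ss n i)) (xr y (ss n (i+1))) := by
  have h : xr y (ss n (i+1)) = xr (xr y (ss n i)) (ee n i) := by
    rw [← ss_succ, xr_assoc, xr_cancel]
  rw [h]; exact adj_e _ hi

theorem adj_se0 {n : ℕ} (y : Fin n → Bool) {i : ℕ} (hi : i + 1 < n) :
    (AQ n).Adj (xr y (ss n i)) (xr y (ee n i)) := by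
  have h : xr y (ee n i) = xr (xr y (ss n i)) (ss n (i+1)) := by
    rw [← ss_succ, xr_assoc]
  rw [h]; exact adj_s _ hi

theorem adj_se1 {n : ℕ} (y : Fin n → Bool) {i : ℕ} (hi : i + 1 < n) :
    (AQ n).Adj (xr y (ss n (i+1))) (xr y (ee n i)) := by
  have h : xr y (ee n i) = xr (xr y (ss n (i+1))) (ss n i) := by
    rw [← ss_succ, xr_assoc, xr_comm (ss n (i+1))]
  rw [h]; exact adj_s _ (by omega)

/-! ### Local rigidity -/

section rigid
variable {n : ℕ}

/-- `y + s_i` is fixed -/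
def Fs (π : Equiv.Perm (Fin n → Bool)) (y : Fin n → Bool) (i : ℕ) : Prop :=
  π (xr y (ss n i)) = xr y (ss n i)

theorem img_s (p : n - 1 < n) {π : Equiv.Perm (Fin n → Bool)} (ha : IsAuto (AQ n) π)
  (hl : ∀ x, π x ⟨n-1, p⟩ = x ⟨n-1, p⟩)
    {y : Fin n → Bool} (hy : π y = y) {i : ℕ} (hi : i < n) :
    ∃ k, k < n ∧ π (xr y (ss n i)) = xr y (ss n k) := by
  have h := (ha _ _).2 (adj_s y hi)
  rw [hy] at h
  refine adj_ne p h ?_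
  rw [hl]; simp [xr_apply, ss_at hi]

theorem img_e (p : n - 1 < n) {π : Equiv.Perm (Fin n → Bool)} (ha : IsAuto (AQ n) π)
  (hl : ∀ x, π x ⟨n-1, p⟩ = x ⟨n-1, p⟩)
    {y : Fin n → Bool} (hy : π y = y) {i : ℕ} (hi : i + 1 < n) :
    ∃ k, k + 1 < n ∧ π (xr y (ee n i)) = xr y (ee n k) := by
  have h := (ha _ _).2 (adj_e y (show i < n by omega))
  rw [hy] at h
  refine adj_eq p h ?_
  rw [hl]; simp [xr_apply, ee_at hi]

theorem step_up (p : n - 1 < n) {π : Equiv.Perm (Fin n → Bool)} (ha : IsAuto (AQ n) π)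
  (hl : ∀ x, π x ⟨n-1, p⟩ = x ⟨n-1, p⟩)
    {y : Fin n → Bool} (hy : π y = y) {i : ℕ} (hi : i + 2 < n)
    (h0 : Fs π y i) (h1 : Fs π y (i+1)) : Fs π y (i+2) := by
  obtain ⟨k, hk, h⟩ := img_s p ha hl hy hi
  have h2 := (ha _ _).2 (adj_ss_succ y (show i + 1 < n by omega))
  rw [h1, h] at h2
  have h3 := adj_ss (by omega) hk h2
  rcases h3 with rfl | h3
  · exact h
  · obtain rfl : i = k := by omega
    rw [← h0] at h
    have := ss_inj hi hk (xr_inj (π.injective h))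
    omega

theorem step_down (p : n - 1 < n) {π : Equiv.Perm (Fin n → Bool)} (ha : IsAuto (AQ n) π)
  (hl : ∀ x, π x ⟨n-1, p⟩ = x ⟨n-1, p⟩)
    {y : Fin n → Bool} (hy : π y = y) {i : ℕ} (hi : i + 2 < n)
    (h1 : Fs π y (i+1)) (h0 : Fs π y (i+2)) : Fs π y i := by
  obtain ⟨k, hk, h⟩ := img_s p ha hl hy (show i < n by omega)
  have h2 := (ha _ _).2 (adj_ss_succ y (show i < n by omega))
  rw [h1, h] at h2
  have h3 := adj_ss hk (by omega) h2
  rcases h3 with h3 | rfl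
  · obtain rfl : i = k := by omega
    exact h
  · rw [← h0] at h
    have := ss_inj (by omega) hk (xr_inj (π.injective h))
    omega

theorem all_s (p : n - 1 < n) {π : Equiv.Perm (Fin n → Bool)} (ha : IsAuto (AQ n) π)
  (hl : ∀ x, π x ⟨n-1, p⟩ = x ⟨n-1, p⟩)
    {y : Fin n → Bool} (hy : π y = y) {l : ℕ} (hl' : l + 1 < n)
    (h0 : Fs π y l) (h1 : Fs π y (l+1)) : ∀ i, i < n → Fs π y i := by
  have up : ∀ d, l + d + 1 < n → Fs π y (l+d) ∧ Fs π y (l+d+1) := by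
    intro d
    induction d with
    | zero => intro _; exact ⟨h0, h1⟩
    | succ d ih =>
      intro hd
      obtain ⟨a, b⟩ := ih (by omega)
      exact ⟨b, step_up p ha hl hy (by omega) a b⟩
  have down : ∀ d, d ≤ l → Fs π y (l-d) ∧ Fs π y (l-d+1) := by
    intro d
    induction d with
    | zero => intro _; exact ⟨h0, h1⟩
    | succ d ih =>
      intro hd
      obtain ⟨a, b⟩ := ih (by omega)
      obtain ⟨m, hm⟩ : ∃ m, l - d = m + 1 := ⟨l - d - 1, by omega⟩
      have hm' : l - (d+1) = m := by omega
      rw [hm] at a b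
      rw [hm']
      exact ⟨step_down p ha hl hy (by omega) a b, a⟩
  intro i hi
  rcases le_or_gt i l with h | h
  · have := (down (l-i) (by omega)).1
    rwa [show l - (l-i) = i by omega] at this
  · have := (up (i-l-1) (by omega)).2
    rwa [show l + (i-l-1) + 1 = i by omega] at this

theorem all_e (p : n - 1 < n) {π : Equiv.Perm (Fin n → Bool)} (ha : IsAuto (AQ n) π)
  (hl : ∀ x, π x ⟨n-1, p⟩ = x ⟨n-1, p⟩)
    {y : Fin n → Bool} (hy : π y = y) (hs : ∀ i, i < n → Fs π y i) :
    ∀ i, i < n → π (xr y (ee n i)) = xr y (ee n i) := by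
  intro i hi
  by_cases hi' : i + 1 < n
  · obtain ⟨k, hk, h⟩ := img_e p ha hl hy hi'
    have h2 := (ha _ _).2 (adj_se0 y hi')
    have h3 := (ha _ _).2 (adj_se1 y hi')
    rw [hs _ hi, h] at h2
    rw [hs _ hi', h] at h3
    have h4 := adj_se hi hk h2
    have h5 := adj_se hi' hk h3
    obtain rfl : i = k := by omega
    exact h
  · obtain rfl : i = n - 1 := by omega
    rw [← ss_last (by omega)]
    exact hs _ hi

/-- a vertex fixed together with all its neighbours -/
def Q (π : Equiv.Perm (Fin n → Bool)) (y : Fin n → Bool) : Prop :=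
  π y = y ∧ (∀ i, i < n → Fs π y i) ∧ ∀ i, i < n → π (xr y (ee n i)) = xr y (ee n i)

theorem Q_of (p : n - 1 < n) {π : Equiv.Perm (Fin n → Bool)} (ha : IsAuto (AQ n) π)
  (hl : ∀ x, π x ⟨n-1, p⟩ = x ⟨n-1, p⟩)
    {y : Fin n → Bool} (hy : π y = y) {l : ℕ} (hl' : l + 1 < n)
    (h0 : Fs π y l) (h1 : Fs π y (l+1)) : Q π y :=
  ⟨hy, all_s p ha hl hy hl' h0 h1, all_e p ha hl hy (all_s p ha hl hy hl' h0 h1)⟩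

theorem Q_step (p : n - 1 < n) {π : Equiv.Perm (Fin n → Bool)} (ha : IsAuto (AQ n) π)
  (hl : ∀ x, π x ⟨n-1, p⟩ = x ⟨n-1, p⟩)
    (hn : 2 ≤ n) {x : Fin n → Bool} (hx : Q π x) {i : ℕ} (hi : i < n) :
    Q π (xr x (ee n i)) := by
  obtain ⟨h0, hs, he⟩ := hx
  by_cases hi' : i + 1 < n
  · refine Q_of p ha hl (he i hi) hi' ?_ ?_
    · have : xr (xr x (ee n i)) (ss n i) = xr x (ss n (i+1)) := by
        rw [← ss_succ, xr_assoc, xr_comm _ (ss n i), xr_cancel]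
      unfold Fs; rw [this]; exact hs _ hi'
    · have : xr (xr x (ee n i)) (ss n (i+1)) = xr x (ss n i) := by
        rw [← ss_succ, xr_assoc, xr_comm _ (ss n (i+1)), xr_comm (ss n i), xr_cancel]
      unfold Fs; rw [this]; exact hs _ hi
  · obtain ⟨m, rfl⟩ : ∃ m, n = m + 2 := ⟨n - 2, by omega⟩
    obtain rfl : i = m + 1 := by omega
    have e1 : ee (m+2) (m+1) = ss (m+2) (m+1) := (ss_last (n := m+2) (by omega)).symm
    refine Q_of p ha hl (he _ hi) (l := m) (by omega) ?_ ?_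
    · have : xr (xr x (ee (m+2) (m+1))) (ss _ m) = xr x (ee _ m) := by
        rw [← ss_succ (i := m), e1, xr_assoc, xr_comm (ss _ (m+1))]
      unfold Fs; rw [this]; exact he _ (by omega)
    · have : xr (xr x (ee (m+2) (m+1))) (ss _ (m+1)) = x := by
        rw [e1, xr_comm, xr_comm x, xr_cancel]
      unfold Fs; rw [this]; exact h0

theorem rigid (p : n - 1 < n) {π : Equiv.Perm (Fin n → Bool)} (ha : IsAuto (AQ n) π)
  (hl : ∀ x, π x ⟨n-1, p⟩ = x ⟨n-1, p⟩)
    (hn : 2 ≤ n) (h0 : π (fun _ => false) = fun _ => false)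
    (h1 : π (ee n (n-1)) = ee n (n-1)) : π = 1 := by
  have z : ∀ y : Fin n → Bool, xr (fun _ => false) y = y := by
    intro y; funext j; simp [xr_apply]
  have q0 : Q π (fun _ => false) := by
    obtain ⟨m, rfl⟩ : ∃ m, n = m + 2 := ⟨n - 2, by omega⟩
    have e1 : ss (m+2) (m+1) = ee (m+2) (m+1) := ss_last (n := m+2) (by omega)
    have f1 : Fs π (fun _ => false) (m+1) := by
      unfold Fs; rw [z, e1]; exact h1
    refine Q_of p ha hl h0 (l := m) (by omega) ?_ f1
    obtain ⟨k, hk, h⟩ := img_s p ha hl h0 (show m < m + 2 by omega)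
    have h2 := (ha _ _).2 (adj_ss_succ (fun _ => false) (show m < m + 2 by omega))
    rw [f1, h] at h2
    have h3 := adj_ss hk (by omega) h2
    obtain rfl : m = k := by omega
    exact h
  have key : ∀ x : Fin n → Bool, ∀ k, k ≤ n → Q π (fun j => x j && decide (j.val < k)) := by
    intro x k
    induction k with
    | zero => intro _; simpa using q0
    | succ k ih =>
      intro hk
      have q := ih (by omega)
      cases hx : x ⟨k, by omega⟩
      · convert q using 1
        funext j
        by_cases hj : j.val = k
        · have hj' : j = ⟨k, by omega⟩ := Fin.ext hj
          rw [hj']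
          simp [hx]
        · have : j.val < k + 1 ↔ j.val < k := by omega
          simp [this]
      · convert Q_step p ha hl hn q (show k < n by omega) using 1
        funext j
        by_cases hj : j.val = k
        · have hj' : j = ⟨k, by omega⟩ := Fin.ext hj
          rw [hj']
          simp [hx, xr_apply, ee]
        · have : j.val < k + 1 ↔ j.val < k := by omega
          simp [this, xr_apply, ee, hj]
  ext1 x
  have := (key x n le_rfl).1
  simpa using this
end rigid

/-! ### The two special vertices -/

/-- Property characterising the special vertex of colour `k`. -/
def P {n : ℕ} (c : (Fin n → Bool) → ℕ) (k : ℕ) (v : Fin n → Bool) : Prop :=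
  c v = k ∧ (∃ w z, c w = k ∧ c z = k ∧ (AQ n).Adj v w ∧ (AQ n).Adj v z ∧ (AQ n).Adj w z) ∧
  ∀ w, c w = k → (AQ n).Adj v w → ∃ z, c z = k ∧ (AQ n).Adj v z ∧ (AQ n).Adj w z

theorem P_map {n : ℕ} {c : (Fin n → Bool) → ℕ} {k : ℕ} {π : Equiv.Perm (Fin n → Bool)}
    (ha : IsAuto (AQ n) π) (hc : ∀ v, c (π v) = c v) {v : Fin n → Bool} (h : P c k v) :
    P c k (π v) := by
  obtain ⟨h0, ⟨w, z, h1, h2, h3, h4, h5⟩, h6⟩ := h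
  refine ⟨by rw [hc, h0], ⟨π w, π z, by rw [hc, h1], by rw [hc, h2], (ha _ _).2 h3, (ha _ _).2 h4,
    (ha _ _).2 h5⟩, ?_⟩
  intro w hw hvw
  obtain ⟨w, rfl⟩ := π.surjective w
  obtain ⟨z, a, b, d⟩ := h6 w (by rw [← hc, hw]) ((ha _ _).1 hvw)
  exact ⟨π z, by rw [hc, a], (ha _ _).2 b, (ha _ _).2 d⟩

section special

theorem P_u {n : ℕ} (p : n - 1 < n) {c : (Fin n → Bool) → ℕ} {k : ℕ} {u : Fin n → Bool}
  (hn : 4 ≤ n)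
  (hk : ∀ x, c x = k ↔ x = u ∨ (x ⟨n-1, p⟩ ≠ u ⟨n-1, p⟩ ∧ x ≠ xr u (ss n (n-1))))
    : P c k u := by
  have cs : ∀ i, i + 1 < n → c (xr u (ss n i)) = k := by
    intro i hi
    refine (hk _).2 (Or.inr ⟨?_, ?_⟩)
    · simp [xr_apply, ss_at (show i < n by omega)]
    · intro h
      have := ss_inj (by omega) p (xr_inj h)
      omega
  refine ⟨(hk u).2 (Or.inl rfl), ⟨xr u (ss n 0), xr u (ss n 1), cs 0 (by omega), cs 1 (by omega),
    adj_s _ (by omega), adj_s _ (by omega), adj_ss_succ _ (by omega)⟩, ?_⟩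
  intro w hw hadj
  rcases (hk w).1 hw with rfl | ⟨h1, h2⟩
  · exact absurd hadj ((AQ n).loopless.irrefl _)
  · obtain ⟨i, hi, rfl⟩ := adj_ne p hadj h1.symm
    have hi1 : i ≠ n - 1 := by rintro rfl; exact h2 rfl
    by_cases hi2 : i + 2 < n
    · exact ⟨xr u (ss n (i+1)), cs _ (by omega), adj_s _ (by omega), adj_ss_succ _ hi⟩
    · obtain ⟨m, rfl⟩ : ∃ m, i = m + 1 := ⟨i - 1, by omega⟩
      exact ⟨xr u (ss n m), cs _ (by omega), adj_s _ (by omega),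
        (adj_ss_succ _ (by omega)).symm⟩

/-- every monochromatic triangle contains `u` -/
theorem mono {n : ℕ} (p : n - 1 < n) {c : (Fin n → Bool) → ℕ} {k : ℕ} {u : Fin n → Bool}
  (hk : ∀ x, c x = k ↔ x = u ∨ (x ⟨n-1, p⟩ ≠ u ⟨n-1, p⟩ ∧ x ≠ xr u (ss n (n-1))))
    {x y z : Fin n → Bool} (hx : c x = k) (hy : c y = k) (hz : c z = k)
    (h1 : (AQ n).Adj x y) (h2 : (AQ n).Adj x z) (h3 : (AQ n).Adj y z) :
    x = u ∨ y = u ∨ z = u := by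
  rcases (hk x).1 hx with h | ⟨hx, -⟩
  · exact Or.inl h
  rcases (hk y).1 hy with h | ⟨hy, -⟩
  · exact Or.inr (Or.inl h)
  rcases (hk z).1 hz with h | ⟨hz, -⟩
  · exact Or.inr (Or.inr h)
  exfalso
  have exy : x ⟨n-1, p⟩ = y ⟨n-1, p⟩ := by
    rw [Bool.eq_not_of_ne hx, Bool.eq_not_of_ne hy]
  have exz : x ⟨n-1, p⟩ = z ⟨n-1, p⟩ := by
    rw [Bool.eq_not_of_ne hx, Bool.eq_not_of_ne hz]
  obtain ⟨i, hi, rfl⟩ := adj_eq p h1 exy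
  obtain ⟨j, hj, rfl⟩ := adj_eq p h2 exz
  obtain ⟨l, hl, h⟩ := adj_eq p h3 (exy.symm.trans exz)
  rw [xr_assoc] at h
  exact ee_ee (by omega) (by omega) (by omega) (xr_inj h).symm

theorem P_unique {n : ℕ} (p : n - 1 < n) {c : (Fin n → Bool) → ℕ} {k : ℕ} {u : Fin n → Bool}
  (hn : 4 ≤ n)
  (hk : ∀ x, c x = k ↔ x = u ∨ (x ⟨n-1, p⟩ ≠ u ⟨n-1, p⟩ ∧ x ≠ xr u (ss n (n-1))))
    {v : Fin n → Bool} (h : P c k v) : v = u := by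
  obtain ⟨h0, ⟨w, z, h1, h2, h3, h4, h5⟩, h6⟩ := h
  by_contra hv
  have huv : (AQ n).Adj u v := by
    rcases mono p hk h0 h1 h2 h3 h4 h5 with h | rfl | rfl
    · exact absurd h hv
    · exact h3.symm
    · exact h4.symm
  rcases (hk v).1 h0 with h | ⟨g1, g2⟩
  · exact hv h
  obtain ⟨l, hl, rfl⟩ := adj_ne p huv g1.symm
  obtain ⟨j, hj, hj1, hj2⟩ : ∃ j, j + 1 < n ∧ l ≠ j ∧ l ≠ j + 1 := by
    by_cases a : l = 0
    · exact ⟨1, by omega, by omega, by omega⟩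
    by_cases b : l = 1
    · exact ⟨2, by omega, by omega, by omega⟩
    exact ⟨0, by omega, by omega, by omega⟩
  have nos : ∀ m, m < n → xr (xr u (ss n l)) (ee n j) ≠ xr u (ss n m) := by
    intro m hm h
    rw [xr_assoc] at h
    have h' := xr_inj h
    have : xr (ss n l) (ss n m) = ee n j := by rw [← h', xr_cancel]
    have := ss_ss hl hm (by omega) this
    omega
  have lastne : xr (xr u (ss n l)) (ee n j) ⟨n-1, p⟩ ≠ u ⟨n-1, p⟩ := by
    rw [xr_apply, xr_apply, ss_at hl, ee_at hj]; simp
  have cw : c (xr (xr u (ss n l)) (ee n j)) = k := (hk _).2 (Or.inr ⟨lastne, nos _ p⟩)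
  have av := adj_e (xr u (ss n l)) (show j < n by omega)
  obtain ⟨z, hz, az, az'⟩ := h6 _ cw av
  rcases mono p hk h0 cw hz av az az' with h | h | rfl
  · exact hv h
  · exact lastne (by rw [h])
  · obtain ⟨m, hm, h⟩ := adj_ne p az'.symm lastne.symm
    exact nos m hm h
end special

end AQProof

open AQProof

theorem stmt_17 (n : ℕ) (hn : 4 ≤ n) (c : (Fin n → Bool) → ℕ)
    (hc : ∀ x : Fin n → Bool,
      c x = if x = (fun _ => false) then 2
            else if x = (fun i : Fin n => decide ((i : ℕ) = n - 1)) then 1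
            else (if x ⟨n - 1, by omega⟩ then 1 else 0) + 1) :
    ∀ π : Equiv.Perm (Fin n → Bool), IsAuto (AQ n) π → (∀ v, c (π v) = c v) → π = 1 := by
  intro π ha hcol
  have p : n - 1 < n := by omega
  have hc' : ∀ x : Fin n → Bool, c x = if x = (fun _ => false) then 2
      else if x = ee n (n-1) then 1 else (if x ⟨n - 1, p⟩ then 1 else 0) + 1 := hc
  have el : ee n (n-1) ⟨n-1, p⟩ = true := by simp [ee]
  have e0 : ee n (n-1) ≠ fun _ => false := by
    intro h; rw [h] at el; simp at el
  have x0 : xr (fun _ => false) (ss n (n-1)) = ee n (n-1) := by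
    rw [ss_last (by omega)]; funext j; simp [xr_apply]
  have x1 : xr (ee n (n-1)) (ss n (n-1)) = fun _ => false := by
    rw [ss_last (by omega)]; funext j; simp [xr_apply]
  have k2 : ∀ x, c x = 2 ↔ x = (fun _ => false) ∨
      (x ⟨n-1, p⟩ ≠ (fun _ => false : Fin n → Bool) ⟨n-1, p⟩ ∧
        x ≠ xr (fun _ => false) (ss n (n-1))) := by
    intro x
    rw [hc', x0]
    by_cases h : x = fun _ => false
    · simp [h]
    by_cases h' : x = ee n (n-1)
    · simp [h', e0]
    cases hx : x ⟨n-1, p⟩ <;> simp [h, h']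
  have k1 : ∀ x, c x = 1 ↔ x = ee n (n-1) ∨
      (x ⟨n-1, p⟩ ≠ ee n (n-1) ⟨n-1, p⟩ ∧ x ≠ xr (ee n (n-1)) (ss n (n-1))) := by
    intro x
    rw [hc', x1, el]
    by_cases h : x = fun _ => false
    · simp [h, e0.symm]
    by_cases h' : x = ee n (n-1)
    · simp [h', e0]
    cases hx : x ⟨n-1, p⟩ <;> simp [h, h']
  have f0 : π (fun _ => false) = fun _ => false :=
    P_unique p hn k2 (P_map ha hcol (P_u p hn k2))
  have f1 : π (ee n (n-1)) = ee n (n-1) :=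
    P_unique p hn k1 (P_map ha hcol (P_u p hn k1))
  refine rigid p ha ?_ (by omega) f0 f1
  intro x
  by_cases h : x = fun _ => false
  · rw [h, f0]
  by_cases h' : x = ee n (n-1)
  · rw [h', f1]
  have g : π x ≠ fun _ => false := fun t => h (π.injective (t.trans f0.symm))
  have g' : π x ≠ ee n (n-1) := fun t => h' (π.injective (t.trans f1.symm))
  have := hcol x
  rw [hc', hc' x] at this
  simp only [h, h', g, g', if_false] at this
  cases hx : x ⟨n-1, p⟩ <;> cases hy : π x ⟨n-1, p⟩ <;> simp [hx, hy] at this ⊢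
end

section
/- For n ≥ 4, let M ⊆ {0,1}^n be the set consisting of the vectors e_i for 1 ≤ i ≤ n−2 (where e_i has a 1 in coordinate i and 0 in every other coordinate) together with the vectors 0^j1^{n−j} for 0 ≤ j ≤ n−3 (whose first j coordinates are 0 and whose remaining n−j coordinates are 1). Then the all-zeros vector 0⋯0 is adjacent in AQ_n to every vertex of M, and it is the unique vertex of AQ_n not belonging to M that is adjacent to every vertex of M. -/
theorem stmt_19 (n : ℕ) (hn : 4 ≤ n)
    (M : Set (Fin n → Bool))
    (hM : M = {v | ∃ k : Fin n, (k : ℕ) ≤ n - 3 ∧ v = fun j : Fin n => decide (j = k)} ∪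
              {v | ∃ j : ℕ, j ≤ n - 3 ∧ v = fun i : Fin n => decide (j ≤ (i : ℕ))}) :
    (fun _ => false) ∉ M ∧
    (∀ m ∈ M, (AQ n).Adj (fun _ => false) m) ∧
    (∀ b : Fin n → Bool, b ∉ M → (∀ m ∈ M, (AQ n).Adj b m) → b = fun _ => false) := by
  subst hM
  refine ⟨?_, ?_, ?_⟩
  · rintro (⟨k, _, h⟩ | ⟨j, hj, h⟩)
    · have := congrFun h k
      simp at this
    · have := congrFun h ⟨n - 1, by omega⟩
      simp at this
      omega
  · rintro m (⟨k, _, rfl⟩ | ⟨j, hj, rfl⟩)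
    · exact Or.inl ⟨k, by simp, fun i hi => by simp [hi]⟩
    · refine Or.inr ⟨⟨j, by omega⟩, fun i hi => ?_, fun i hi => ?_⟩
      · have : (i : ℕ) < j := hi
        simp [this]
      · have : j ≤ (i : ℕ) := hi
        simp [this]
  · intro b hbM hb
    -- only the neighbours e_1, 1^n and 01^(n-1) are needed
    have h1 := hb _ (Or.inl ⟨⟨0, by omega⟩, by simp, rfl⟩)
    have h2 := hb _ (Or.inr ⟨0, by omega, rfl⟩)
    have h3 := hb _ (Or.inr ⟨1, by omega, rfl⟩)
    have key : ∀ (m : Fin n → Bool), (AQ n).Adj b m →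
        (∃ l : ℕ, l < n ∧ ∀ i : Fin n, ((i : ℕ) = l ↔ b i ≠ m i)) ∨
        (∃ l : ℕ, l < n ∧ ∀ i : Fin n, (l ≤ (i : ℕ) ↔ b i ≠ m i)) := by
      rintro m (⟨l, ha, hc⟩ | ⟨l, ha, hc⟩)
      · refine Or.inl ⟨l, l.2, fun i => ⟨fun h => ?_, fun h => ?_⟩⟩
        · have : i = l := Fin.ext h
          exact this ▸ ha
        · by_contra h'
          exact h (hc i (fun e => h' (by rw [e])))
      · refine Or.inr ⟨l, l.2, fun i => ⟨fun h => hc i h, fun h => ?_⟩⟩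
        by_contra h'
        exact h (ha i (not_le.mp h'))
    have k1 := key _ h1
    have k2 := key _ h2
    have k3 := key _ h3
    clear key h1 h2 h3 hb hbM
    funext i
    rcases k1 with ⟨p, hp, k1⟩ | ⟨p, hp, k1⟩ <;> rcases k2 with ⟨q, hq, k2⟩ | ⟨q, hq, k2⟩ <;>
      rcases k3 with ⟨r, hr, k3⟩ | ⟨r, hr, k3⟩ <;>
    · have a0 := And.intro (k1 ⟨0, by omega⟩) (And.intro (k2 ⟨0, by omega⟩) (k3 ⟨0, by omega⟩))
      have a1 := And.intro (k1 ⟨1, by omega⟩) (And.intro (k2 ⟨1, by omega⟩) (k3 ⟨1, by omega⟩))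
      have a2 := And.intro (k1 ⟨2, by omega⟩) (And.intro (k2 ⟨2, by omega⟩) (k3 ⟨2, by omega⟩))
      have a3 := And.intro (k1 ⟨3, by omega⟩) (And.intro (k2 ⟨3, by omega⟩) (k3 ⟨3, by omega⟩))
      have a4 := And.intro (k1 ⟨n-1, by omega⟩)
        (And.intro (k2 ⟨n-1, by omega⟩) (k3 ⟨n-1, by omega⟩))
      have a5 := And.intro (k1 i) (And.intro (k2 i) (k3 i))
      have a6 := And.intro (k1 ⟨q, hq⟩) (And.intro (k2 ⟨q, hq⟩) (k3 ⟨q, hq⟩))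
      have a7 := And.intro (k1 ⟨p, hp⟩) (And.intro (k2 ⟨p, hp⟩) (k3 ⟨p, hp⟩))
      have a8 := And.intro (k1 ⟨r, hr⟩) (And.intro (k2 ⟨r, hr⟩) (k3 ⟨r, hr⟩))
      clear k1 k2 k3
      simp [Fin.ext_iff] at a0 a1 a2 a3 a4 a5 a6 a7 a8
      grind
end
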